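/- arXiv:math/0406195 — 2 statements merged into one kernel-verified Lean document; each statement's English description precedes it below -/
import Mathlib

section
/- Let L be an algebraically closed field and K an algebraically closed field extension of L. Let d, e ≥ 1, let t ∈ L[X,Y,Z] be a nonzero squarefree homogeneous polynomial of degree e, and let p₁, …, p_r be finitely many nonzero points of L³ (marked points of the curve t = 0). Let (u_α) be a family of elements of K, indexed by the monomials α of degree d in X, Y, Z, which is algebraically independent over L, and set s = ∑_α u_α·α ∈ K[X,Y,Z]. Then s(pᵢ) ≠ 0 for each i = 1, …, r, and for every nonzero point p ∈ K³ with s(p) = 0 and t(p) = 0 the gradient vectors of s and t at p are linearly independent over K. -/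
open MvPolynomial

theorem MvPolynomial.pderiv_eq_zero_of_dvd {σ R : Type*} [CommRing R] [IsDomain R]
    {q : MvPolynomial σ R} {i : σ} (h : q ∣ pderiv i q) : pderiv i q = 0 := by
  by_contra hne
  obtain ⟨r, hr⟩ := h
  have hq : q ≠ 0 := by rintro rfl; simp at hne
  have hr0 : r ≠ 0 := by rintro rfl; simp [hr] at hne
  have key : ∀ m ∈ (pderiv i q).support, (m.sum fun _ e => e) + 1 ≤ q.totalDegree := by
    intro m hm
    rw [mem_support_iff, coeff_pderiv] at hm
    have := le_totalDegree (mem_support_iff.2 (left_ne_zero_of_mul hm))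
    rwa [Finsupp.sum_add_index' (by simp) (by simp), Finsupp.sum_single_index rfl] at this
  obtain ⟨m, hm⟩ := support_nonempty.2 hne
  have h1 := key m hm
  have h2 : (pderiv i q).totalDegree ≤ q.totalDegree - 1 :=
    Finset.sup_le fun m hm => Nat.le_sub_one_of_lt (key m hm)
  rw [hr, totalDegree_mul_of_isDomain hq hr0] at h2
  omega

theorem MvPolynomial.exists_pderiv_ne_zero_of_irreducible {σ k : Type*} [Field k] [IsAlgClosed k]
    {q : MvPolynomial σ k} (hq : Irreducible q) : ∃ i, pderiv i q ≠ 0 := by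
  by_contra! h
  have hexp : ∀ m ∈ q.support, ∀ i, (m i : k) = 0 := by
    intro m hm i
    by_contra hmi
    have hpos : 1 ≤ m i := Nat.one_le_iff_ne_zero.2 fun h0 => hmi (by simp [h0])
    have hm' : m - Finsupp.single i 1 + Finsupp.single i 1 = m :=
      tsub_add_cancel_of_le (Finsupp.single_le_iff.2 hpos)
    have := congrArg (coeff (m - Finsupp.single i 1)) (h i)
    rw [coeff_pderiv, hm', coeff_zero] at this
    refine (mul_ne_zero (mem_support_iff.1 hm) ?_) this
    simpa [Nat.cast_sub hpos] using hmi
  obtain ⟨p, hp⟩ := CharP.exists k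
  rcases CharP.char_is_prime_or_zero k p with hpp | rfl
  · have : Fact p.Prime := ⟨hpp⟩
    have hroot : ∀ m : σ →₀ ℕ, ∃ c : k, c ^ p = coeff m q := fun m =>
      IsAlgClosed.exists_pow_nat_eq _ hpp.pos
    choose c hc using hroot
    have hpow : q = (∑ m ∈ q.support, monomial (m.mapRange (· / p) (by simp)) (c m)) ^ p := by
      rw [sum_pow_char]
      conv_lhs => rw [q.as_sum]
      refine Finset.sum_congr rfl fun m hm => ?_
      rw [monomial_pow, hc]
      refine congrArg (fun m' => monomial m' (coeff m q)) (Finsupp.ext fun i => ?_)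
      simpa using (Nat.mul_div_cancel' ((CharP.cast_eq_zero_iff k p _).1 (hexp m hm i))).symm
    rw [hpow] at hq
    exact not_irreducible_pow hpp.ne_one hq
  · have : CharZero k := CharP.charP_to_charZero k
    have hC : q = C (coeff 0 q) := by
      classical
      ext m
      rw [coeff_C]
      split_ifs with h0
      · rw [h0]
      · by_contra hm
        exact h0 (Finsupp.ext fun i => by
          simpa using (Nat.cast_eq_zero.1 (hexp m (mem_support_iff.2 hm) i)).symm)
    have h0 : coeff 0 q ≠ 0 := fun h0 => hq.ne_zero (by rw [hC, h0, C_0])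
    exact hq.not_isUnit (hC ▸ (isUnit_iff_ne_zero.2 h0).map C)

theorem Polynomial.dvd_of_irreducible_of_eval₂_eq_zero {R F : Type*} [CommRing R] [IsDomain R]
    [IsGCDMonoid R] [Field F] {φ : R →+* F} (hφ : Function.Injective φ) {c : F}
    {q h : Polynomial R} (hq : Irreducible q) (hqc : q.eval₂ φ c = 0) (hhc : h.eval₂ φ c = 0) :
    q ∣ h := by
  algebraize [φ]
  let Q := FractionRing R
  have : FaithfulSMul R F := (faithfulSMul_iff_algebraMap_injective R F).2 hφ
  let _ : Algebra Q F := FractionRing.liftAlgebra R F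
  have hev (f : Polynomial R) (hf : f.eval₂ φ c = 0) :
      Polynomial.aeval c (f.map (algebraMap R Q)) = 0 := by
    rwa [Polynomial.aeval_map_algebraMap]
  have hdeg : q.natDegree ≠ 0 := by
    intro h0
    rw [Polynomial.eq_C_of_natDegree_eq_zero h0, Polynomial.eval₂_C] at hqc
    have := (map_eq_zero_iff φ hφ).1 hqc
    refine hq.ne_zero ?_
    rw [Polynomial.eq_C_of_natDegree_eq_zero h0, this, Polynomial.C_0]
  have hprim : q.IsPrimitive := hq.isPrimitive hdeg
  have hirr := (hprim.irreducible_iff_irreducible_map_fraction_map (K := Q)).1 hq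
  refine hprim.dvd_of_fraction_map_dvd_fraction_map (K := Q) ?_
  have h1 := minpoly.dvd Q c (hev q hqc)
  have h2 := minpoly.dvd Q c (hev h hhc)
  have hint : IsIntegral Q c := IsAlgebraic.isIntegral ⟨_, hirr.ne_zero, hev q hqc⟩
  exact ((minpoly.irreducible hint).dvd_symm hirr h1).trans h2

/-- If all but one coordinate of `p` are algebraically independent, then an irreducible polynomial
vanishing at `p` generates the ideal of all polynomials vanishing at `p`. -/
theorem MvPolynomial.dvd_of_irreducible_of_aeval_eq_zero {σ k F : Type*} [Field k] [Field F]
    [Algebra k F] {p : σ → F} {j : σ} (hp : AlgebraicIndependent k fun i : {i // i ≠ j} => p i)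
    {q h : MvPolynomial σ k} (hq : Irreducible q) (hqp : aeval p q = 0) (hhp : aeval p h = 0) :
    q ∣ h := by
  classical
  let f : MvPolynomial σ k ≃ₐ[k] Polynomial (MvPolynomial {i // i ≠ j} k) :=
    (renameEquiv k (Equiv.optionSubtypeNe j).symm).trans (optionEquivLeft k _)
  let φ : MvPolynomial {i // i ≠ j} k →ₐ[k] F := aeval fun i => p i
  have hf (g : MvPolynomial σ k) : (f g).eval₂ (φ : _ →+* F) (p j) = aeval p g := by
    induction g using MvPolynomial.induction_on with
    | C a => simp [f, φ]
    | add g₁ g₂ h₁ h₂ => rw [map_add, Polynomial.eval₂_add, h₁, h₂, map_add]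
    | mul_X g i h =>
      rw [map_mul, Polynomial.eval₂_mul, h, map_mul, aeval_X]
      congr 1
      by_cases hi : i = j
      · subst hi; simp [f]
      · simp [f, φ, Equiv.optionSubtypeNe_symm_of_ne hi]
  rw [← map_dvd_iff f]
  exact Polynomial.dvd_of_irreducible_of_eval₂_eq_zero (φ := (φ : _ →+* F))
    (show Function.Injective φ from hp)
    ((MulEquiv.irreducible_iff f).2 hq) ((hf q).trans hqp) ((hf h).trans hhp)

theorem MvPolynomial.exists_aeval_pderiv_ne_zero_of_squarefree {σ k F : Type*} [Field k]
    [IsAlgClosed k] [Field F] [Algebra k F] {p : σ → F} {j : σ}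
    (hp : AlgebraicIndependent k fun i : {i // i ≠ j} => p i)
    {t : MvPolynomial σ k} (ht0 : t ≠ 0) (ht : Squarefree t) (htp : aeval p t = 0) :
    ∃ i, aeval p (pderiv i t) ≠ 0 := by
  obtain ⟨q, hq, ⟨h, rfl⟩, hqp⟩ : ∃ q, Irreducible q ∧ q ∣ t ∧ aeval p q = 0 := by
    obtain ⟨f, hf, hft⟩ := WfDvdMonoid.exists_factors t ht0
    have h0 : aeval p f.prod = 0 := by
      obtain ⟨u, hu⟩ := hft.symm
      rw [← hu, map_mul, htp, zero_mul]
    rw [map_multiset_prod, Multiset.prod_eq_zero_iff, Multiset.mem_map] at h0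
    obtain ⟨q, hqf, hq⟩ := h0
    exact ⟨q, hf q hqf, (Multiset.dvd_prod hqf).trans hft.dvd, hq⟩
  have hh : aeval p h ≠ 0 := by
    intro hhp
    obtain ⟨r, rfl⟩ := dvd_of_irreducible_of_aeval_eq_zero hp hq hqp hhp
    exact hq.not_isUnit (ht q ⟨r, by ring⟩)
  obtain ⟨i, hi⟩ := exists_pderiv_ne_zero_of_irreducible hq
  refine ⟨i, fun h0 => hi (pderiv_eq_zero_of_dvd ?_)⟩
  refine dvd_of_irreducible_of_aeval_eq_zero hp hq hqp ?_
  simpa [Derivation.leibniz, hqp, hh] using h0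

theorem MvPolynomial.IsHomogeneous.aeval_smul {σ R A : Type*} [CommSemiring R] [CommSemiring A]
    [Algebra R A] {f : MvPolynomial σ R} {n : ℕ} (hf : f.IsHomogeneous n) (c : A) (p : σ → A) :
    MvPolynomial.aeval (c • p) f = c ^ n * MvPolynomial.aeval p f := by
  rw [aeval_def, aeval_def, eval₂_eq, eval₂_eq, Finset.mul_sum]
  refine Finset.sum_congr rfl fun m hm => ?_
  have hdeg : ∑ i ∈ m.support, m i = n := by
    rw [← hf (mem_support_iff.1 hm), Finsupp.weight_apply]; simp [Finsupp.sum]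
  simp only [Pi.smul_apply, smul_eq_mul, mul_pow, Finset.prod_mul_distrib,
    Finset.prod_pow_eq_pow_sum, hdeg]
  ring

namespace AlgebraicIndependent

section Matroid

variable {k F : Type*} [Field k] [Field F] [Algebra k F]

/-- Closures in the algebraic matroid of a field extension are intermediate fields. -/
theorem exists_intermediateField_eq_matroid_closure (S : Set F) :
    ∃ E : IntermediateField k F, (E : Set F) = (matroid k F).closure S := by
  refine ⟨{ (Subalgebra.algebraicClosure (Algebra.adjoin k S) F).restrictScalars k with
    inv_mem' := fun x hx => ?_ }, ?_⟩
  · exact IsAlgebraic.inv hx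
  · rw [matroid_closure_eq]
    rfl

theorem exists_algebraicIndepOn_of_le_eRk {ι : Type*} {q : ι → F} {n : ℕ∞}
    (h : n ≤ (matroid k F).eRk (Set.range q)) :
    ∃ T : Set ι, T.encard = n ∧ AlgebraicIndepOn k q T := by
  obtain ⟨I, hI, hind, rfl⟩ := Matroid.le_eRk_iff.1 h
  obtain ⟨T, -, hT⟩ := Set.SurjOn.exists_bijOn_subset (f := q) (s := Set.univ) (t := I)
    (by rwa [Set.SurjOn, Set.image_univ])
  refine ⟨T, ?_, ?_⟩
  · rw [← hT.image_eq, hT.injOn.encard_image]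
  · exact (matroid_indep_iff.1 hind).comp (fun x : T => (⟨q x, hT.mapsTo x.2⟩ : I))
      fun x y hxy => Subtype.ext (hT.injOn x.2 y.2 (congrArg Subtype.val hxy))

theorem eRk_range_add_one_le_eRk_range_smul {ι : Type*} {p : ι → F} {i : ι} (hi : p i = 1) {c : F}
    (hc : c ∉ (matroid k F).closure (Set.range p)) :
    (matroid k F).eRk (Set.range p) + 1 ≤ (matroid k F).eRk (Set.range (c • p)) := by
  obtain ⟨E, hE⟩ := exists_intermediateField_eq_matroid_closure (k := k) (Set.range (c • p))
  have hmem (m : ι) : c * p m ∈ E := by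
    rw [← SetLike.mem_coe, hE]
    exact Matroid.mem_closure_of_mem _ ⟨m, rfl⟩
  have hcE : c ∈ E := by simpa [hi] using hmem i
  have hc0 : c ≠ 0 := by
    rintro rfl
    refine hc ?_
    obtain ⟨E', hE'⟩ := exists_intermediateField_eq_matroid_closure (k := k) (Set.range p)
    rw [← hE']
    exact E'.zero_mem
  rw [← Matroid.eRk_insert_eq_add_one ⟨Set.mem_univ _, hc⟩,
    ← Matroid.eRk_closure_eq _ (Set.range (c • p)), ← hE]
  refine Matroid.eRk_mono _ (Set.insert_subset hcE ?_)
  rintro _ ⟨m, rfl⟩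
  have := E.mul_mem (E.inv_mem hcE) (hmem m)
  rwa [inv_mul_cancel_left₀ hc0] at this

theorem not_range_subset_closure_compl_pair_union {ι : Type*} [Finite ι] {u : ι → F}
    (hu : AlgebraicIndependent k u) {a b : ι} (hab : a ≠ b) {P : Set F}
    (hP : (matroid k F).eRk P ≤ 1) :
    ¬ Set.range u ⊆ (matroid k F).closure (u '' {a, b}ᶜ ∪ P) := by
  intro hsub
  have h1 : (Set.range u).encard ≤ (u '' {a, b}ᶜ).encard + 1 := by
    rw [← (matroid_indep_iff.2 (AlgebraicIndependent.to_subtype_range hu)).eRk_eq_encard]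
    refine ((matroid k F).eRk_mono hsub).trans ?_
    rw [Matroid.eRk_closure_eq]
    exact ((matroid k F).eRk_union_le_encard_add_eRk _ _).trans (by gcongr)
  rw [hu.injective.encard_image, ← Set.image_univ, hu.injective.encard_image,
    ← Set.encard_add_encard_compl {a, b}, Set.encard_pair hab, add_comm] at h1
  have hfin : ({a, b}ᶜ : Set ι).encard ≠ ⊤ := Set.encard_ne_top_iff.2 (Set.toFinite _)
  rw [ENat.add_le_add_iff_left hfin] at h1
  norm_num at h1

end Matroid

end AlgebraicIndependent

theorem IntermediateField.mem_of_sum_mul_eq_zero {k F ι : Type*} [Field k] [Field F] [Algebra k F]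
    [Fintype ι] (E : IntermediateField k F) {u c : ι → F} {a : ι} (hc : ∀ i, c i ∈ E)
    (ha : c a ≠ 0) (hu : ∀ i, i ≠ a → u i ∈ E ∨ c i = 0) (h : ∑ i, u i * c i = 0) : u a ∈ E := by
  classical
  rw [← Finset.add_sum_erase _ _ (Finset.mem_univ a)] at h
  rw [eq_div_of_mul_eq ha (eq_neg_of_add_eq_zero_left h)]
  refine E.div_mem (E.neg_mem (sum_mem fun i hi => ?_)) (hc a)
  rcases hu i (Finset.ne_of_mem_erase hi) with hi | hi
  · exact E.mul_mem hi (hc i)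
  · rw [hi, mul_zero]; exact E.zero_mem

theorem IntermediateField.aeval_mem {k F σ : Type*} [Field k] [Field F] [Algebra k F]
    (E : IntermediateField k F) {p : σ → F} (hp : ∀ i, p i ∈ E) (f : MvPolynomial σ k) :
    aeval p f ∈ E := by
  induction f using MvPolynomial.induction_on with
  | C a => simp
  | add f g hf hg => simpa using E.add_mem hf hg
  | mul_X f i hf => simpa using E.mul_mem hf (hp i)

/-- The exponents of the monomials of degree `d` in three variables. -/
abbrev PlaneMonomial (d : ℕ) := {α : Fin 3 →₀ ℕ // α 0 + α 1 + α 2 = d}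

instance (d : ℕ) : Finite (PlaneMonomial d) := by
  have hlt (α : PlaneMonomial d) (i : Fin 3) : (α : Fin 3 →₀ ℕ) i < d + 1 := by
    have := α.property
    fin_cases i <;> simp <;> omega
  refine Finite.of_injective (fun α i => (⟨_, hlt α i⟩ : Fin (d + 1))) fun α β h => ?_
  exact Subtype.ext (Finsupp.ext fun i => congrArg Fin.val (congrFun h i))

namespace MvPolynomial

theorem IsHomogeneous.eq_sum_planeMonomial {R : Type*} [CommSemiring R] {d : ℕ}
    [Fintype (PlaneMonomial d)] {s : MvPolynomial (Fin 3) R} (hs : s.IsHomogeneous d) :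
    s = ∑ α : PlaneMonomial d, s.coeff α • monomial (α : Fin 3 →₀ ℕ) 1 := by
  classical
  ext m
  simp only [coeff_sum, coeff_smul, coeff_monomial, smul_eq_mul, mul_ite, mul_one, mul_zero]
  by_cases hm : m 0 + m 1 + m 2 = d
  · rw [Finset.sum_eq_single ⟨m, hm⟩ (fun α _ hα => if_neg fun h => hα (Subtype.ext h)) (by simp)]
    simp
  · rw [Finset.sum_eq_zero fun (α : PlaneMonomial d) _ =>
      if_neg fun h : (α : Fin 3 →₀ ℕ) = m => hm (h ▸ α.property)]
    refine hs.coeff_eq_zero fun h => hm ?_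
    rw [← h, Finsupp.degree_eq_sum, Fin.sum_univ_three]

theorem single_mem_planeMonomial (d : ℕ) (i : Fin 3) :
    Finsupp.single i d 0 + Finsupp.single i d 1 + Finsupp.single i d 2 = d := by
  rw [← Fin.sum_univ_three, ← Finsupp.degree_eq_sum, Finsupp.degree_single]

theorem single_add_single_mem_planeMonomial {d : ℕ} (hd : 1 ≤ d) (i j : Fin 3) :
    (Finsupp.single i (d - 1) + Finsupp.single j 1 : Fin 3 →₀ ℕ) 0 +
      (Finsupp.single i (d - 1) + Finsupp.single j 1 : Fin 3 →₀ ℕ) 1 +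
      (Finsupp.single i (d - 1) + Finsupp.single j 1 : Fin 3 →₀ ℕ) 2 = d := by
  rw [← Fin.sum_univ_three, ← Finsupp.degree_eq_sum, map_add, Finsupp.degree_single,
    Finsupp.degree_single, Nat.sub_add_cancel hd]

variable {k F : Type*} [Field k] [Field F] [Algebra k F] {d : ℕ} {s : MvPolynomial (Fin 3) F}

theorem eval_algebraMap_ne_zero_of_algebraicIndependent_coeff (hs : s.IsHomogeneous d)
    (hgen : AlgebraicIndependent k fun α : PlaneMonomial d => s.coeff α)
    {v : Fin 3 → k} (hv : v ≠ 0) : eval (fun j => algebraMap k F (v j)) s ≠ 0 := by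
  intro h
  obtain ⟨i, hi⟩ := Function.ne_iff.1 hv
  have := Fintype.ofFinite (PlaneMonomial d)
  rw [hs.eq_sum_planeMonomial, map_sum] at h
  have hlin := Fintype.linearIndependent_iff.1 hgen.linearIndependent
    (fun α => eval v (monomial (α : Fin 3 →₀ ℕ) 1)) (by
      rw [← h]
      refine Finset.sum_congr rfl fun α _ => ?_
      simp [eval_monomial, Algebra.smul_def, mul_comm, Finsupp.prod])
    ⟨Finsupp.single i d, single_mem_planeMonomial d i⟩
  simp [eval_monomial] at hlin
  exact hi hlin.1

theorem exists_notMem_closure_range_of_algebraicIndependent_coeff (hd : 1 ≤ d)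
    (hgen : AlgebraicIndependent k fun α : PlaneMonomial d => s.coeff α)
    {p : Fin 3 → F} {i : Fin 3} (hi : p i = 1) :
    ∃ c : F, c ∉ (AlgebraicIndependent.matroid k F).closure (Set.range p) := by
  by_contra! hall
  set M := AlgebraicIndependent.matroid k F
  obtain ⟨E, hE⟩ := AlgebraicIndependent.exists_intermediateField_eq_matroid_closure (k := k)
    (p '' {i}ᶜ)
  have hrange : Set.range p ⊆ M.closure (p '' {i}ᶜ) := by
    rintro _ ⟨j, rfl⟩
    by_cases hj : j = i
    · rw [← hE, hj, hi]
      exact E.one_mem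
    · exact Matroid.mem_closure_of_mem _ ⟨j, hj, rfl⟩
  have hle : M.eRk (Set.range p) ≤ 2 := by
    refine (M.eRk_mono hrange).trans ?_
    rw [Matroid.eRk_closure_eq]
    refine (M.eRk_le_encard _).trans ((Set.encard_image_le _ _).trans ?_)
    have h3 := Set.encard_add_encard_compl ({i} : Set (Fin 3))
    rw [Set.encard_singleton, Set.encard_univ, ENat.card_eq_coe_fintype_card, Fintype.card_fin,
      show ((3 : ℕ) : ℕ∞) = 1 + 2 by norm_num] at h3
    exact (ENat.add_le_add_iff_left ENat.one_ne_top).1 h3.le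
  let m : Fin 3 → PlaneMonomial d := fun j =>
    ⟨Finsupp.single i (d - 1) + Finsupp.single j 1, single_add_single_mem_planeMonomial hd i j⟩
  have hm : Function.Injective m := fun j j' h => by
    have := add_left_cancel (congrArg Subtype.val h)
    exact Finsupp.single_left_injective one_ne_zero this
  have hind := hgen.comp m hm
  have hcard := (AlgebraicIndependent.matroid_indep_iff.2
    (AlgebraicIndependent.to_subtype_range hind)).encard_le_eRk_of_subset
    (X := M.closure (Set.range p)) fun x _ => hall x
  rw [Matroid.eRk_closure_eq, ← Set.image_univ, hind.injective.encard_image, Set.encard_univ,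
    ENat.card_eq_coe_fintype_card, Fintype.card_fin] at hcard
  exact absurd (hcard.trans hle) (by decide)

theorem exists_algebraMap_eq_of_eRk_eq_zero [IsAlgClosed k] {ι : Type*} {p : ι → F}
    (h : (AlgebraicIndependent.matroid k F).eRk (Set.range p) = 0) :
    ∃ v : ι → k, ∀ i, algebraMap k F (v i) = p i := by
  rw [Matroid.eRk_eq_zero_iff (Set.subset_univ _), ← Matroid.closure_empty,
    AlgebraicIndependent.matroid_closure_eq] at h
  choose v hv using fun i => show ∃ a, algebraMap k F a = p i from by
    have hi : IsAlgebraic (Algebra.adjoin k (∅ : Set F)) (p i) := h ⟨i, rfl⟩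
    rw [Algebra.adjoin_empty] at hi
    have hint : IsIntegral k (p i) := (Subalgebra.isAlgebraic_of_isAlgebraic_bot hi).isIntegral
    exact minpoly.mem_range_of_degree_eq_one k _
      (IsAlgClosed.degree_eq_one_of_irreducible k (minpoly.irreducible hint))
  exact ⟨v, hv⟩

theorem eRk_range_le_one_and_exists_aeval_pderiv_ne_zero [IsAlgClosed k] (hd : 1 ≤ d) {e : ℕ}
    {t : MvPolynomial (Fin 3) k} (ht0 : t ≠ 0) (htsf : Squarefree t) (ht : t.IsHomogeneous e)
    (hs : s.IsHomogeneous d)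
    (hgen : AlgebraicIndependent k fun α : PlaneMonomial d => s.coeff α)
    {p : Fin 3 → F} {i : Fin 3} (hi : p i = 1) (hsp : eval p s = 0) (htp : aeval p t = 0) :
    (AlgebraicIndependent.matroid k F).eRk (Set.range p) ≤ 1 ∧
      ∃ j, aeval p (pderiv j t) ≠ 0 := by
  set M := AlgebraicIndependent.matroid k F
  have hpos : 1 ≤ M.eRk (Set.range p) := by
    rw [Order.one_le_iff_ne_zero]
    intro h0
    obtain ⟨v, hv⟩ := exists_algebraMap_eq_of_eRk_eq_zero h0
    refine eval_algebraMap_ne_zero_of_algebraicIndependent_coeff hs hgen (v := v) ?_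
      (by simpa only [hv] using hsp)
    rintro rfl
    simpa [hi] using hv i
  obtain ⟨c, hc⟩ := exists_notMem_closure_range_of_algebraicIndependent_coeff hd hgen hi
  have hrk := AlgebraicIndependent.eRk_range_add_one_le_eRk_range_smul hi hc
  have htcp : aeval (c • p) t = 0 := by rw [ht.aeval_smul, htp, mul_zero]
  have hle : M.eRk (Set.range p) ≤ 1 := by
    by_contra! hlt
    have h3 : 3 ≤ M.eRk (Set.range (c • p)) := by
      refine le_trans ?_ hrk
      rw [show (3 : ℕ∞) = 1 + 1 + 1 by norm_num]
      gcongr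
      exact Order.add_one_le_of_lt hlt
    obtain ⟨T, hT, hind⟩ := AlgebraicIndependent.exists_algebraicIndepOn_of_le_eRk h3
    have hTuniv : T = Set.univ :=
      (Set.toFinite T).eq_of_subset_of_encard_le (Set.subset_univ _) (by simp [hT])
    subst hTuniv
    have hall : AlgebraicIndependent k (c • p) :=
      hind.comp (fun j => (⟨j, trivial⟩ : (Set.univ : Set (Fin 3))))
        fun _ _ h => congrArg Subtype.val h
    exact ht0 (hall.eq_zero_of_aeval_eq_zero t htcp)
  refine ⟨hle, ?_⟩
  have h2 : 2 ≤ M.eRk (Set.range (c • p)) := by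
    refine le_trans ?_ hrk
    rw [show (2 : ℕ∞) = 1 + 1 by norm_num]
    gcongr
  obtain ⟨T, hT, hind⟩ := AlgebraicIndependent.exists_algebraicIndepOn_of_le_eRk h2
  obtain ⟨l, hl⟩ : ∃ l, Tᶜ = {l} := by
    rw [← Set.encard_eq_one]
    have h3 := Set.encard_add_encard_compl T
    rw [hT, Set.encard_univ, ENat.card_eq_coe_fintype_card, Fintype.card_fin,
      show ((3 : ℕ) : ℕ∞) = 2 + 1 by norm_num] at h3
    exact ENat.add_right_injective_of_ne_top (by simp) h3
  have hsub : {x | x ≠ l} ⊆ T := fun x hx => by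
    by_contra hxT
    exact hx (by simpa [hl] using (show x ∈ Tᶜ from hxT))
  have hne : AlgebraicIndepOn k (c • p) {x | x ≠ l} := hind.mono hsub
  obtain ⟨j, hj⟩ := exists_aeval_pderiv_ne_zero_of_squarefree (j := l) hne ht0 htsf htcp
  rw [ht.pderiv.aeval_smul] at hj
  exact ⟨j, right_ne_zero_of_mul hj⟩

/-- At a common zero of `s` and `t` some `2 × 2` minor of the two gradients is nonzero: otherwise
two coefficients of `s` would be rational over the remaining ones and the coordinates of `p`, which
have transcendence degree at most one. -/
theorem exists_gradient_minor_ne_zero [IsAlgClosed k] (hd : 1 ≤ d) {e : ℕ}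
    {t : MvPolynomial (Fin 3) k} (ht0 : t ≠ 0) (htsf : Squarefree t) (ht : t.IsHomogeneous e)
    (hs : s.IsHomogeneous d)
    (hgen : AlgebraicIndependent k fun α : PlaneMonomial d => s.coeff α)
    {p : Fin 3 → F} {i : Fin 3} (hi : p i = 1) (hsp : eval p s = 0) (htp : aeval p t = 0) :
    ∃ j l, aeval p (pderiv j t) * eval p (pderiv l s) -
      aeval p (pderiv l t) * eval p (pderiv j s) ≠ 0 := by
  by_contra! hminor
  have := Fintype.ofFinite (PlaneMonomial d)
  obtain ⟨hle, j, hj⟩ :=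
    eRk_range_le_one_and_exists_aeval_pderiv_ne_zero hd ht0 htsf ht hs hgen hi hsp htp
  obtain ⟨j, hji, hj⟩ : ∃ j, j ≠ i ∧ aeval p (pderiv j t) ≠ 0 := by
    by_contra! hzero
    have heuler := congrArg (aeval p) ht.sum_X_mul_pderiv
    rw [map_sum, map_nsmul, htp, smul_zero, Finset.sum_eq_single i
      (fun l _ hl => by rw [map_mul, hzero l hl, mul_zero]) (by simp)] at heuler
    rw [map_mul, aeval_X, hi, one_mul] at heuler
    by_cases hji : j = i
    · exact hj (hji ▸ heuler)
    · exact hj (hzero j hji)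
  obtain ⟨l, hli, hlj⟩ : ∃ l : Fin 3, l ≠ i ∧ l ≠ j := by
    clear * -
    decide +revert
  let a : PlaneMonomial d := ⟨Finsupp.single i d, single_mem_planeMonomial d i⟩
  let b : PlaneMonomial d :=
    ⟨Finsupp.single i (d - 1) + Finsupp.single l 1, single_add_single_mem_planeMonomial hd i l⟩
  have hab : a ≠ b := fun h => by
    have := DFunLike.congr_fun (congrArg Subtype.val h) l
    simp [a, b, hli.symm] at this
  obtain ⟨E, hE⟩ := AlgebraicIndependent.exists_intermediateField_eq_matroid_closure (k := k)
    ((fun α : PlaneMonomial d => s.coeff α) '' {a, b}ᶜ ∪ Set.range p)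
  have hpE (m : Fin 3) : p m ∈ E := by
    rw [← SetLike.mem_coe, hE]
    exact Matroid.mem_closure_of_mem _ (Or.inr ⟨m, rfl⟩)
  have hrest (α : PlaneMonomial d) (hαa : α ≠ a) (hαb : α ≠ b) : s.coeff α ∈ E := by
    rw [← SetLike.mem_coe, hE]
    exact Matroid.mem_closure_of_mem _ (Or.inl ⟨α, by simp [hαa, hαb], rfl⟩)
  have hbE : s.coeff b ∈ E := by
    refine E.mem_of_sum_mul_eq_zero (u := fun α : PlaneMonomial d => s.coeff α) (a := b)
      (c := fun α => aeval p (pderiv j t * pderiv l (monomial (α : Fin 3 →₀ ℕ) 1) -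
        pderiv l t * pderiv j (monomial (α : Fin 3 →₀ ℕ) 1)))
      (fun α => E.aeval_mem hpE _) ?_ (fun α hα => ?_) ?_
    · have hbl (n : ℕ) : aeval p (pderiv l
          (monomial (Finsupp.single i n + Finsupp.single l 1) (1 : k))) = 1 := by
        rw [pderiv_monomial, add_tsub_cancel_right]
        simp [aeval_monomial, hli.symm, hi]
      have hbj (n : ℕ) : pderiv j
          (monomial (Finsupp.single i n + Finsupp.single l 1) (1 : k)) = 0 := by
        simp [pderiv_monomial, hlj, hji.symm]
      simpa only [b, map_sub, map_mul, hbl, hbj, mul_one, mul_zero, map_zero, sub_zero] using hj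
    · by_cases hαa : α = a
      · right
        subst hαa
        simp [a, pderiv_monomial, hji.symm, hli.symm]
      · exact Or.inl (hrest α hαa hα)
    · rw [← hminor j l]
      conv_rhs => rw [hs.eq_sum_planeMonomial]
      simp only [map_sum, Finset.mul_sum, ← Finset.sum_sub_distrib]
      refine Finset.sum_congr rfl fun α _ => ?_
      simp [pderiv_monomial, aeval_monomial, eval_monomial]
      ring
  have haE : s.coeff a ∈ E := by
    refine E.mem_of_sum_mul_eq_zero (u := fun α : PlaneMonomial d => s.coeff α) (a := a)
      (c := fun α => aeval p (monomial (α : Fin 3 →₀ ℕ) (1 : k)))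
      (fun α => E.aeval_mem hpE _) ?_ (fun α hα => ?_) ?_
    · simp [a, aeval_monomial, hi]
    · by_cases hαb : α = b
      · exact Or.inl (hαb ▸ hbE)
      · exact Or.inl (hrest α hα hαb)
    · rw [← hsp]
      conv_rhs => rw [hs.eq_sum_planeMonomial]
      rw [map_sum]
      refine Finset.sum_congr rfl fun α _ => ?_
      simp [aeval_monomial, eval_monomial]
  refine AlgebraicIndependent.not_range_subset_closure_compl_pair_union hgen hab hle ?_
  rw [← hE]
  rintro _ ⟨α, rfl⟩
  by_cases hαa : α = a
  · exact hαa ▸ haE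
  · by_cases hαb : α = b
    · exact hαb ▸ hbE
    · exact hrest α hαa hαb

end MvPolynomial

theorem linearIndependent_pair_of_minor_ne_zero {R ι : Type*} [Field R] {v w : ι → R} {j l : ι}
    (h : w j * v l - w l * v j ≠ 0) : LinearIndependent R ![v, w] := by
  rw [LinearIndependent.pair_iff]
  intro x y hxy
  have hj : x * v j + y * w j = 0 := congrFun hxy j
  have hl : x * v l + y * w l = 0 := congrFun hxy l
  constructor
  · refine (mul_eq_zero.1 (?_ : x * (w j * v l - w l * v j) = 0)).resolve_right h
    linear_combination w j * hl - w l * hj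
  · refine (mul_eq_zero.1 (?_ : y * (w j * v l - w l * v j) = 0)).resolve_right h
    linear_combination v l * hj - v j * hl

/-- Moving Lemma for curves with finitely many marked points (Lemma 4.14): let
`t ∈ L[X,Y,Z]` be a nonzero squarefree homogeneous polynomial of degree `e`, let
`p₁, …, p_r` be finitely many nonzero marked points in `L³`, and let `s ∈ K[X,Y,Z]` be
homogeneous of degree `d` with all of its coefficients (indexed by the monomials of
degree `d`) algebraically independent over `L`.  Then `s` does not vanish at any marked
point, and at every nonzero common zero `p` of `s` and `t` the gradients of `s` and `t`
are linearly independent over `K`. -/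
theorem moving_lemma_marked_points (L K : Type) [Field L] [IsAlgClosed L]
    [Field K] [IsAlgClosed K] [Algebra L K] (d e : ℕ) (hd : 1 ≤ d) (he : 1 ≤ e)
    (t : MvPolynomial (Fin 3) L) (ht0 : t ≠ 0) (htsf : Squarefree t)
    (hthom : t.IsHomogeneous e)
    (r : ℕ) (pt : Fin r → (Fin 3 → L)) (hpt : ∀ i, pt i ≠ 0)
    (s : MvPolynomial (Fin 3) K) (hshom : s.IsHomogeneous d)
    (hgen : AlgebraicIndependent L
      (fun α : {α : Fin 3 →₀ ℕ // α 0 + α 1 + α 2 = d} => s.coeff (α : Fin 3 →₀ ℕ))) :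
    (∀ i, eval (fun j => algebraMap L K (pt i j)) s ≠ 0) ∧
    (∀ p : Fin 3 → K, p ≠ 0 → eval p s = 0 →
      eval p (MvPolynomial.map (algebraMap L K) t) = 0 →
      LinearIndependent K
        ![(fun i : Fin 3 => eval p (pderiv i s)),
          (fun i : Fin 3 => eval p (pderiv i (MvPolynomial.map (algebraMap L K) t)))]) := by
  refine ⟨fun i => eval_algebraMap_ne_zero_of_algebraicIndependent_coeff hshom hgen (hpt i),
    fun p hp hsp htp => ?_⟩
  obtain ⟨i, hi⟩ := Function.ne_iff.1 hp
  have hi : p i ≠ 0 := hi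
  set q : Fin 3 → K := (p i)⁻¹ • p with hq
  have hpq : p = p i • q := by rw [hq, smul_smul, mul_inv_cancel₀ hi, one_smul]
  have hqi : q i = 1 := inv_mul_cancel₀ hi
  have hev (f : MvPolynomial (Fin 3) K) (n : ℕ) (hf : f.IsHomogeneous n) :
      eval p f = p i ^ n * eval q f := by
    have := hf.aeval_smul (p i) q
    rwa [← hpq, aeval_eq_eval, aeval_eq_eval] at this
  have hev' (f : MvPolynomial (Fin 3) L) (n : ℕ) (hf : f.IsHomogeneous n) :
      eval p (MvPolynomial.map (algebraMap L K) f) = p i ^ n * aeval q f := by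
    rw [eval_map, ← aeval_def]
    simpa only [← hpq] using hf.aeval_smul (p i) q
  rw [hev s d hshom] at hsp
  rw [hev' t e hthom] at htp
  obtain ⟨j, l, hjl⟩ := exists_gradient_minor_ne_zero hd ht0 htsf hthom hshom hgen hqi
    ((mul_eq_zero.1 hsp).resolve_left (pow_ne_zero _ hi))
    ((mul_eq_zero.1 htp).resolve_left (pow_ne_zero _ hi))
  refine linearIndependent_pair_of_minor_ne_zero (j := j) (l := l) ?_
  simp only [pderiv_map, hev' _ _ hthom.pderiv, hev _ _ hshom.pderiv]
  have := mul_ne_zero (mul_ne_zero (pow_ne_zero (e - 1) hi) (pow_ne_zero (d - 1) hi)) hjl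
  convert this using 1
  ring
end

section
/- Let L be an algebraically closed field and let f, g ∈ L[x,y] be polynomials which, viewed as polynomials in x with coefficients in L[y], are monic of positive x-degree, and which have no common nonconstant factor. Let R(y) = Res_x(f,g) ∈ L[y] be their resultant with respect to x; then R ≠ 0, and the order of vanishing of R at y = 0 (the multiplicity of 0 as a root of R) equals ∑_{a ∈ L, f(a,0) = g(a,0) = 0} I(f,g,(a,0)), the sum of the intersection multiplicities of the curves f = 0 and g = 0 at their common points on the line y = 0. -/
open MvPolynomial

/-- The Sylvester matrix of two polynomials `f, g` (of degrees `m = f.natDegree` and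
`n = g.natDegree`): the first `n` rows are the shifted coefficient sequences of `f`, the
remaining `m` rows those of `g`. -/
noncomputable def sylvesterMatrix {R : Type*} [CommRing R] (f g : Polynomial R) :
    Matrix (Fin (f.natDegree + g.natDegree)) (Fin (f.natDegree + g.natDegree)) R :=
  Matrix.of fun i j =>
    if (i : ℕ) < g.natDegree then
      (if (i : ℕ) ≤ (j : ℕ) then f.coeff ((j : ℕ) - (i : ℕ)) else 0)
    else
      (if ((i : ℕ) - g.natDegree) ≤ (j : ℕ) then
        g.coeff ((j : ℕ) - ((i : ℕ) - g.natDegree)) else 0)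

/-- The resultant of two polynomials: the determinant of their Sylvester matrix. -/
noncomputable def resultant {R : Type*} [CommRing R] (f g : Polynomial R) : R :=
  (sylvesterMatrix f g).det

/-- The identification `L[x,y] ≃ (L[y])[x]` (the outer variable of the iterated
polynomial ring is `x`, the first variable of the multivariate ring). -/
noncomputable def mvToPolyPoly (L : Type) [Field L] :
    MvPolynomial (Fin 2) L ≃ₐ[L] Polynomial (Polynomial L) :=
  (MvPolynomial.finSuccEquiv L 1).trans
    (Polynomial.mapAlgEquiv ((MvPolynomial.finSuccEquiv L 0).trans
      (Polynomial.mapAlgEquiv (MvPolynomial.isEmptyAlgEquiv L (Fin 0)))))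

/-- The maximal ideal of `L[x,y]` corresponding to the point `p = (p₁, p₂)`, i.e. the
kernel of evaluation at `p`, which is the ideal `(x - p₁, y - p₂)`. -/
noncomputable def ptIdeal (L : Type) [Field L] (p : L × L) : Ideal (MvPolynomial (Fin 2) L) :=
  RingHom.ker (aeval (R := L) ![p.1, p.2])

theorem ptIdeal_isMaximal (L : Type) [Field L] (p : L × L) : (ptIdeal L p).IsMaximal :=
  RingHom.ker_isMaximal_of_surjective _ (fun x => ⟨C x, by simp⟩)

/-- The intersection multiplicity `I(f, g, p)` of the plane curves `f = 0` and `g = 0`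
at the point `p`: the dimension over `L` of the localization of `L[x,y]/(f,g)` at the
maximal ideal `(x - p₁, y - p₂)`. -/
noncomputable def interMult (L : Type) [Field L] (f g : MvPolynomial (Fin 2) L)
    (p : L × L) : Cardinal :=
  haveI : (ptIdeal L p).IsPrime := (ptIdeal_isMaximal L p).isPrime
  letI : Algebra L (Localization.AtPrime (ptIdeal L p)) :=
    ((algebraMap (MvPolynomial (Fin 2) L) (Localization.AtPrime (ptIdeal L p))).comp
      (algebraMap L (MvPolynomial (Fin 2) L))).toAlgebra
  Module.rank L
    (Localization.AtPrime (ptIdeal L p) ⧸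
      (Ideal.span {algebraMap (MvPolynomial (Fin 2) L) (Localization.AtPrime (ptIdeal L p)) f,
        algebraMap (MvPolynomial (Fin 2) L) (Localization.AtPrime (ptIdeal L p)) g}))

section SylvesterComparison

variable {R : Type*} [CommRing R]

theorem resultant_eq_polynomial_resultant (f g : Polynomial R) :
    resultant f g = Polynomial.resultant g f := by
  have h : sylvesterMatrix f g =
      ((Polynomial.sylvester g f g.natDegree f.natDegree).transpose).submatrix
        (finCongr (add_comm _ _)) (finCongr (add_comm _ _)) := by
    ext i j
    obtain ⟨i, rfl⟩ := (finCongr (add_comm g.natDegree f.natDegree)).surjective i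
    induction i using Fin.addCases with
    | left i =>
      simp only [sylvesterMatrix, Polynomial.sylvester, Matrix.of_apply, Matrix.submatrix_apply,
        Matrix.transpose_apply]
      simp
      rw [ite_and]
      split_ifs with h₁ h₂ <;> try rfl
      exact Polynomial.coeff_eq_zero_of_natDegree_lt (by lia)
    | right i =>
      simp only [sylvesterMatrix, Polynomial.sylvester, Matrix.of_apply, Matrix.submatrix_apply,
        Matrix.transpose_apply]
      simp
      rw [ite_and]
      split_ifs with h₁ h₂ <;> try rfl
      exact Polynomial.coeff_eq_zero_of_natDegree_lt (by lia)
  rw [resultant, h, Matrix.det_submatrix_equiv_self, Matrix.det_transpose, Polynomial.resultant]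

end SylvesterComparison

section Cokernel

open Module

variable {R ι V W : Type*} [CommRing R] [IsDomain R] [IsPrincipalIdealRing R]
  [Fintype ι] [DecidableEq ι] [AddCommGroup V] [Module R V] [AddCommGroup W] [Module R W]

/-- Smith normal form for an injective linear map with square matrix: the determinant is the
product of the elementary divisors, up to a unit. -/
theorem exists_basis_mem_range_iff (b₁ : Basis ι R V) (b₂ : Basis ι R W) (φ : V →ₗ[R] W)
    (hφ : Function.Injective φ) :
    ∃ (b : Basis ι R W) (d : ι → R), Associated (LinearMap.toMatrix b₁ b₂ φ).det (∏ i, d i) ∧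
      ∀ w, w ∈ LinearMap.range φ ↔ ∀ i, d i ∣ b.repr w i := by
  let e := LinearEquiv.ofInjective φ hφ
  have hrank : finrank R (LinearMap.range φ) = finrank R W := by
    rw [finrank_eq_card_basis b₂, finrank_eq_card_basis (b₁.map e)]
  obtain ⟨b, d, c, hc⟩ := Submodule.exists_smith_normal_form_of_rank_eq b₂ hrank
  refine ⟨b, d, ?_, fun w => ?_⟩
  · have hφe : φ = LinearMap.id ∘ₗ (LinearMap.range φ).subtype ∘ₗ e.toLinearMap := by ext; simp [e]
    have hdiag : LinearMap.toMatrix c b (LinearMap.range φ).subtype = Matrix.diagonal d := by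
      ext i j
      simp [LinearMap.toMatrix_apply, hc, Matrix.diagonal_apply, Finsupp.single_apply, eq_comm]
      aesop
    have h₁ : IsUnit (LinearMap.toMatrix b₁ c e.toLinearMap).det := LinearEquiv.isUnit_det e b₁ c
    have h₂ : IsUnit (LinearMap.toMatrix b b₂ (LinearMap.id : W →ₗ[R] W)).det :=
      LinearEquiv.isUnit_det (LinearEquiv.refl R W) b b₂
    conv_lhs => rw [hφe, LinearMap.toMatrix_comp b₁ b b₂, LinearMap.toMatrix_comp b₁ c b,
      Matrix.det_mul, Matrix.det_mul, hdiag, Matrix.det_diagonal]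
    rw [mul_left_comm]
    exact (associated_mul_isUnit_left_iff (h₂.mul h₁)).mpr (Associated.refl _)
  · rw [c.mem_submodule_iff']
    simp only [hc]
    have key : ∀ (t : ι → R) (i), b.repr (∑ j, t j • d j • b j) i = d i * t i := fun t i => by
      simp only [← mul_smul, b.repr_sum_self, mul_comm]
    constructor
    · rintro ⟨t, rfl⟩ i
      exact ⟨t i, key t i⟩
    · intro h
      choose t ht using h
      exact ⟨t, b.ext_elem fun i => (ht i).trans (key t i).symm⟩

variable {T : Type*} [AddCommGroup T] [Module R T]

/-- The cokernel of an injective linear map with square matrix, reduced modulo `c`, is a product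
of quotients `R ⧸ (d i, c)` where the product of the `d i` is the determinant up to a unit. -/
theorem exists_equiv_pi_quotient_span_pair (b₁ : Basis ι R V) (b₂ : Basis ι R W)
    (φ : V →ₗ[R] W) (hφ : Function.Injective φ) (c : R)
    (Φ : W →ₗ[R] T) (hΦ : Function.Surjective Φ)
    (hkerΦ : LinearMap.ker Φ = LinearMap.range φ ⊔ LinearMap.range (LinearMap.lsmul R W c)) :
    ∃ d : ι → R, Associated (LinearMap.toMatrix b₁ b₂ φ).det (∏ i, d i) ∧
      Nonempty (T ≃ₗ[R] ∀ i, R ⧸ Ideal.span {d i, c}) := by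
  obtain ⟨b, d, hassoc, hmem⟩ := exists_basis_mem_range_iff b₁ b₂ φ hφ
  let Ψ : W →ₗ[R] ∀ i, R ⧸ Ideal.span {d i, c} :=
    LinearMap.pi fun i => (Submodule.mkQ (Ideal.span {d i, c})) ∘ₗ b.coord i
  have hΨ : Function.Surjective Ψ := by
    intro v
    choose t ht using fun i => Submodule.mkQ_surjective _ (v i)
    refine ⟨∑ i, t i • b i, funext fun i => ?_⟩
    simp only [Ψ, LinearMap.pi_apply, LinearMap.comp_apply, Basis.coord_apply, b.repr_sum_self, ht]
  have hker : LinearMap.ker Ψ =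
      LinearMap.range φ ⊔ LinearMap.range (LinearMap.lsmul R W c) := by
    ext w
    have h1 : w ∈ LinearMap.ker Ψ ↔ ∀ i, b.repr w i ∈ Ideal.span {d i, c} := by
      simp [Ψ, _root_.funext_iff, Ideal.Quotient.eq_zero_iff_mem]
    rw [h1, Submodule.mem_sup]
    constructor
    · intro h
      choose s t hst using fun i => Ideal.mem_span_pair.mp (h i)
      refine ⟨∑ i, (s i * d i) • b i, (hmem _).mpr fun i => ?_, c • ∑ i, t i • b i,
        ⟨∑ i, t i • b i, LinearMap.lsmul_apply _ _⟩, ?_⟩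
      · rw [b.repr_sum_self]; exact dvd_mul_left _ _
      · refine b.ext_elem fun i => ?_
        rw [map_add, map_smul, Finsupp.add_apply, Finsupp.smul_apply, b.repr_sum_self,
          b.repr_sum_self, smul_eq_mul, mul_comm c, hst]
    · rintro ⟨v, hv, _, ⟨w, rfl⟩, rfl⟩ i
      rw [map_add, Finsupp.add_apply]
      refine Ideal.add_mem _ ?_ ?_
      · exact Ideal.mem_of_dvd _ ((hmem v).mp hv i) (Ideal.subset_span (by simp))
      · simp only [LinearMap.lsmul_apply, map_smul, Finsupp.smul_apply, smul_eq_mul]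
        exact Ideal.mul_mem_right _ _ (Ideal.subset_span (by simp))
  exact ⟨d, hassoc, ⟨((Φ.quotKerEquivOfSurjective hΦ).symm.trans
    (Submodule.quotEquivOfEq _ _ (hkerΦ.trans hker.symm))).trans
    (Ψ.quotKerEquivOfSurjective hΨ)⟩⟩

end Cokernel

section LocalOrder

open scoped Polynomial

open Module

variable {L : Type*} [Field L]

theorem span_pair_X_pow_eq {d : L[X]} (hd : d ≠ 0) {k : ℕ} (hk : d.rootMultiplicity 0 ≤ k) :
    Ideal.span {d, Polynomial.X ^ k} =
      Ideal.span {(Polynomial.X : L[X]) ^ d.rootMultiplicity 0} := by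
  obtain ⟨u, hu, hu0⟩ := Polynomial.exists_eq_pow_rootMultiplicity_mul_and_not_dvd d hd 0
  rw [Polynomial.C_0, sub_zero] at hu hu0
  set o := d.rootMultiplicity 0
  apply le_antisymm
  · rw [Ideal.span_le]
    rintro x (rfl | rfl)
    · exact Ideal.mem_span_singleton.mpr ⟨u, hu⟩
    · exact Ideal.mem_span_singleton.mpr (pow_dvd_pow _ hk)
  · rw [Ideal.span_singleton_le_iff_mem]
    have hcop : IsCoprime u (Polynomial.X ^ (k - o)) :=
      ((Polynomial.irreducible_X.coprime_iff_not_dvd.mpr hu0).symm).pow_right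
    obtain ⟨s, t, hst⟩ := hcop
    refine Ideal.mem_span_pair.mpr ⟨s, t, ?_⟩
    have : (Polynomial.X : L[X]) ^ k = Polynomial.X ^ o * Polynomial.X ^ (k - o) := by
      rw [← pow_add, Nat.add_sub_cancel' hk]
    rw [this, hu]
    linear_combination Polynomial.X ^ o * hst

theorem finrank_quotient_span_pair_X_pow {d : L[X]} (hd : d ≠ 0) {k : ℕ}
    (hk : d.rootMultiplicity 0 ≤ k) :
    finrank L (L[X] ⧸ Ideal.span {d, Polynomial.X ^ k}) = d.rootMultiplicity 0 := by
  rw [span_pair_X_pow_eq hd hk, finrank_quotient_span_eq_natDegree, Polynomial.natDegree_X_pow]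

theorem finite_quotient_span_pair_X_pow (d : L[X]) (k : ℕ) :
    Module.Finite L (L[X] ⧸ Ideal.span {d, Polynomial.X ^ k}) := by
  have : Module.Finite L (L[X] ⧸ Ideal.span {(Polynomial.X : L[X]) ^ k}) :=
    (Polynomial.monic_X_pow k).finite_quotient
  exact Module.Finite.of_surjective
    (Ideal.Quotient.factorₐ L (Ideal.span_mono (by simp))).toLinearMap
    (Ideal.Quotient.factor_surjective
      (Ideal.span_mono (show ({(Polynomial.X : L[X]) ^ k} : Set L[X]) ⊆
        {d, Polynomial.X ^ k} by simp)))

end LocalOrder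

section SylvesterMap

open Module

variable {R : Type*} [CommRing R]

theorem sylvesterMap_injective [IsDomain R] [UniqueFactorizationMonoid R]
    {f g : Polynomial R} (hfm : f.Monic) (hcop : IsRelPrime f g) :
    Function.Injective (Polynomial.sylvesterMap f g le_rfl le_rfl) := by
  rw [injective_iff_map_eq_zero]
  rintro ⟨⟨p, hp⟩, ⟨q, hq⟩⟩ h
  have h' : f * q + g * p = 0 := congrArg Subtype.val h
  have hdvd : f ∣ g * p := ⟨-q, by linear_combination h'⟩
  have hp0 : p = 0 := by
    by_contra hne
    have hle := Polynomial.degree_le_of_dvd (hcop.dvd_of_dvd_mul_left hdvd) hne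
    rw [Polynomial.degree_eq_natDegree hfm.ne_zero] at hle
    exact absurd (Polynomial.mem_degreeLT.mp hp) (not_lt.mpr hle)
  subst hp0
  have hq0 : q = 0 := by simpa [hfm.ne_zero] using h'
  subst hq0
  rfl

theorem polynomial_resultant_ne_zero [IsDomain R] [UniqueFactorizationMonoid R]
    {f g : Polynomial R} (hfm : f.Monic) (hcop : IsRelPrime f g) :
    Polynomial.resultant f g ≠ 0 := by
  intro h
  rw [Polynomial.resultant, ← Polynomial.toMatrix_sylvesterMap' f g le_rfl le_rfl,
    ← Matrix.exists_mulVec_eq_zero_iff] at h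
  obtain ⟨v, hv, hv0⟩ := h
  set b₁ := (((Polynomial.degreeLT.basis R f.natDegree).prod
    (Polynomial.degreeLT.basis R g.natDegree)).reindex finSumFinEquiv) with hb₁
  obtain ⟨w, rfl⟩ := b₁.equivFun.surjective v
  have hw := LinearMap.toMatrix_mulVec_repr b₁
    (Polynomial.degreeLT.basis R (f.natDegree + g.natDegree))
    (Polynomial.sylvesterMap f g le_rfl le_rfl) w
  have hw0 : w = 0 := by
    apply sylvesterMap_injective hfm hcop
    rw [map_zero]
    apply (Polynomial.degreeLT.basis R (f.natDegree + g.natDegree)).ext_elem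
    intro i
    rw [← hw]
    exact (congrFun hv0 i).trans (by simp)
  exact hv (by simp [hw0])

/-- For monic `f`, an element of `(f, g, c)` of degree `< deg f + deg g` is a combination
of `f` and `g` with the degree bounds of the Sylvester map, up to a multiple of `c`
subject to the same degree bound. -/
theorem mem_span_iff_mem_range_sylvesterMap [Nontrivial R] {f g : Polynomial R} (hfm : f.Monic)
    (hgm : g.Monic) (c : R)
    (w : Polynomial.degreeLT R (f.natDegree + g.natDegree)) :
    (w : Polynomial R) ∈ Ideal.span {f, g, Polynomial.C c} ↔
      w ∈ LinearMap.range (Polynomial.sylvesterMap f g le_rfl le_rfl) ⊔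
        LinearMap.range (LinearMap.lsmul R
          (Polynomial.degreeLT R (f.natDegree + g.natDegree)) c) := by
  constructor
  · intro hw
    obtain ⟨a, z, hz, hw⟩ := Ideal.mem_span_insert.mp hw
    obtain ⟨b, h, rfl⟩ := Ideal.mem_span_pair.mp hz
    have hfg := hfm.mul hgm
    have hdeg : (f * g).degree = ((f.natDegree + g.natDegree : ℕ) : WithBot ℕ) := by
      rw [Polynomial.degree_eq_natDegree hfg.ne_zero, hfm.natDegree_mul hgm]
    have hh : (h %ₘ (f * g)).degree < ((f.natDegree + g.natDegree : ℕ) : WithBot ℕ) :=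
      hdeg ▸ Polynomial.degree_modByMonic_lt h hfg
    have hb : (b %ₘ f).degree < (f.natDegree : WithBot ℕ) :=
      Polynomial.degree_eq_natDegree hfm.ne_zero ▸ Polynomial.degree_modByMonic_lt b hfm
    have hbg : ((b %ₘ f) * g).degree < ((f.natDegree + g.natDegree : ℕ) : WithBot ℕ) := by
      rw [hgm.degree_mul, Polynomial.degree_eq_natDegree hgm.ne_zero, Nat.cast_add]
      exact WithBot.add_lt_add_right (WithBot.natCast_ne_bot _) hb
    set t := a + Polynomial.C c * g * (h /ₘ (f * g)) + (b /ₘ f) * g with ht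
    have hsum : (w : Polynomial R) = t * f + (b %ₘ f) * g + Polynomial.C c * (h %ₘ (f * g)) := by
      have e₁ := Polynomial.modByMonic_add_div h (f * g)
      have e₂ := Polynomial.modByMonic_add_div b f
      rw [hw, ht]
      linear_combination -(Polynomial.C c) * e₁ - g * e₂
    have htf : (t * f).degree < ((f.natDegree + g.natDegree : ℕ) : WithBot ℕ) := by
      have e : t * f = w - (b %ₘ f) * g - Polynomial.C c * (h %ₘ (f * g)) := by
        rw [hsum]; ring
      rw [← Polynomial.mem_degreeLT, e, ← Polynomial.smul_eq_C_mul]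
      exact Submodule.sub_mem _ (Submodule.sub_mem _ w.2 (Polynomial.mem_degreeLT.mpr hbg))
        (Submodule.smul_mem _ _ (Polynomial.mem_degreeLT.mpr hh))
    have htd : t.degree < (g.natDegree : WithBot ℕ) := by
      rw [hfm.degree_mul, Polynomial.degree_eq_natDegree hfm.ne_zero, add_comm f.natDegree,
        Nat.cast_add] at htf
      exact lt_of_add_lt_add_right htf
    refine Submodule.mem_sup.mpr ⟨_, ⟨(⟨b %ₘ f, Polynomial.mem_degreeLT.mpr hb⟩,
      ⟨t, Polynomial.mem_degreeLT.mpr htd⟩), rfl⟩, _, ⟨⟨h %ₘ (f * g),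
        Polynomial.mem_degreeLT.mpr hh⟩, rfl⟩, Subtype.ext ?_⟩
    simp only [Submodule.coe_add, Polynomial.sylvesterMap_apply_coe, LinearMap.lsmul_apply,
      Submodule.coe_smul, Polynomial.smul_eq_C_mul, hsum]
    ring
  · intro hw
    obtain ⟨_, ⟨⟨p, q⟩, rfl⟩, _, ⟨h, rfl⟩, rfl⟩ := Submodule.mem_sup.mp hw
    simp only [Submodule.coe_add, Polynomial.sylvesterMap_apply_coe, LinearMap.lsmul_apply,
      Submodule.coe_smul, Polynomial.smul_eq_C_mul]
    refine Ideal.add_mem _ (Ideal.add_mem _ ?_ ?_) ?_ <;>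
      exact Ideal.mul_mem_right _ _ (Ideal.subset_span (by simp))

/-- For coprime monic `f` and `g` over a principal ideal domain `R`, the `R`-module
`R[X] ⧸ (f, g, c)` is a product of quotients `R ⧸ (d i, c)` where the product of the `d i` is
the resultant of `f` and `g` up to a unit. -/
theorem exists_quotient_span_triple_equiv [IsDomain R] [IsPrincipalIdealRing R]
    {f g : Polynomial R} (hfm : f.Monic) (hgm : g.Monic) (hcop : IsRelPrime f g) (c : R) :
    ∃ d : Fin (f.natDegree + g.natDegree) → R,
      Associated (Polynomial.resultant f g) (∏ i, d i) ∧
      Nonempty ((Polynomial R ⧸ Ideal.span {f, g, Polynomial.C c}) ≃ₗ[R]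
        ∀ i, R ⧸ Ideal.span {d i, c}) := by
  let Φ := (Ideal.Quotient.mkₐ R (Ideal.span {f, g, Polynomial.C c})).toLinearMap ∘ₗ
    Submodule.subtype (Polynomial.degreeLT R (f.natDegree + g.natDegree))
  have hΦ : Function.Surjective Φ := by
    intro z
    obtain ⟨p, rfl⟩ := Ideal.Quotient.mk_surjective z
    have hp : (p %ₘ f).degree < ((f.natDegree + g.natDegree : ℕ) : WithBot ℕ) :=
      (Polynomial.degree_modByMonic_lt p hfm).trans_le
        (Polynomial.degree_le_natDegree.trans (by exact_mod_cast Nat.le_add_right _ _))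
    refine ⟨⟨p %ₘ f, Polynomial.mem_degreeLT.mpr hp⟩, Ideal.Quotient.eq.mpr ?_⟩
    have e : p %ₘ f - p = f * -(p /ₘ f) := by
      linear_combination Polynomial.modByMonic_add_div p f
    simp only [Submodule.subtype_apply, e]
    exact Ideal.mul_mem_right _ _ (Ideal.subset_span (by simp))
  have hker : LinearMap.ker Φ = LinearMap.range (Polynomial.sylvesterMap f g le_rfl le_rfl) ⊔
      LinearMap.range (LinearMap.lsmul R
        (Polynomial.degreeLT R (f.natDegree + g.natDegree)) c) := by
    ext w
    rw [← mem_span_iff_mem_range_sylvesterMap hfm hgm]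
    exact Ideal.Quotient.eq_zero_iff_mem
  have key := exists_equiv_pi_quotient_span_pair
    (((Polynomial.degreeLT.basis R f.natDegree).prod
      (Polynomial.degreeLT.basis R g.natDegree)).reindex finSumFinEquiv)
    (Polynomial.degreeLT.basis R (f.natDegree + g.natDegree))
    _ (sylvesterMap_injective hfm hcop) c Φ hΦ hker
  rwa [Polynomial.toMatrix_sylvesterMap'] at key

end SylvesterMap

section Dimension

open scoped Polynomial

open Module

variable {L : Type*} [Field L]

/-- For coprime monic `f` and `g`, the dimension of `L[y][x] ⧸ (f, g, y ^ k)`, with `k` at least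
the order at `0` of the resultant of `f` and `g`, is that order. -/
theorem finrank_quotient_span_triple {f g : L[X][X]} (hfm : f.Monic) (hgm : g.Monic)
    (hcop : IsRelPrime f g) {k : ℕ} (hk : (Polynomial.resultant f g).rootMultiplicity 0 ≤ k) :
    Module.Finite L (L[X][X] ⧸ Ideal.span {f, g, Polynomial.C ((Polynomial.X : L[X]) ^ k)}) ∧
    finrank L (L[X][X] ⧸ Ideal.span {f, g, Polynomial.C ((Polynomial.X : L[X]) ^ k)}) =
      (Polynomial.resultant f g).rootMultiplicity 0 := by
  obtain ⟨d, hassoc, ⟨e⟩⟩ :=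
    exists_quotient_span_triple_equiv hfm hgm hcop ((Polynomial.X : L[X]) ^ k)
  have hprod : ∏ i, d i ≠ 0 := fun h =>
    polynomial_resultant_ne_zero hfm hcop ((hassoc.eq_zero_iff).mpr h)
  have hd : ∀ i, d i ≠ 0 := fun i => Finset.prod_ne_zero_iff.mp hprod i (Finset.mem_univ i)
  have hsum : (Polynomial.resultant f g).rootMultiplicity 0 =
      ∑ i, (d i).rootMultiplicity 0 := by
    classical
    rw [← Polynomial.count_roots, hassoc.roots_eq, Polynomial.roots_prod _ _ hprod,
      Multiset.count_bind]
    simp only [Polynomial.count_roots, Finset.sum_map_val]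
  have hdk : ∀ i, (d i).rootMultiplicity 0 ≤ k := fun i =>
    (Finset.single_le_sum (f := fun i => (d i).rootMultiplicity 0) (fun _ _ => Nat.zero_le _)
      (Finset.mem_univ i)).trans (hsum ▸ hk)
  have := fun i => finite_quotient_span_pair_X_pow (d i) k
  let e' := e.restrictScalars L
  refine ⟨Module.Finite.equiv e'.symm, ?_⟩
  rw [e'.finrank_eq, finrank_pi_fintype, hsum]
  exact Finset.sum_congr rfl fun i _ => finrank_quotient_span_pair_X_pow (hd i) (hdk i)

end Dimension

section LocalRing

variable {K S : Type*} [CommRing K] [CommRing S] [Algebra K S]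

theorem nonempty_localization_quotient_equiv (I : Ideal S) (q : Ideal (S ⧸ I)) [q.IsPrime]
    (p : Ideal S) [p.IsPrime] (hp : q.comap (Ideal.Quotient.mk I) = p) :
    Nonempty ((Localization.AtPrime p ⧸ I.map (algebraMap S (Localization.AtPrime p))) ≃ₗ[K]
      Localization.AtPrime q) := by
  have : q.LiesOver p := ⟨hp.symm⟩
  have h : Algebra.algebraMapSubmonoid (S ⧸ I) p.primeCompl = q.primeCompl :=
    Ideal.algebraMapSubmonoid_primeCompl_of_liesOver_surjective q p Ideal.Quotient.mk_surjective
  have hloc : IsLocalization q.primeCompl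
      (Localization.AtPrime p ⧸ I.map (algebraMap S (Localization.AtPrime p))) :=
    h ▸ inferInstance
  have : IsScalarTower K (S ⧸ I)
      (Localization.AtPrime p ⧸ I.map (algebraMap S (Localization.AtPrime p))) :=
    IsScalarTower.of_algebraMap_eq fun _ => rfl
  exact ⟨((IsLocalization.algEquiv q.primeCompl
    (Localization.AtPrime p ⧸ I.map (algebraMap S (Localization.AtPrime p)))
    (Localization.AtPrime q)).restrictScalars K).toLinearEquiv⟩

end LocalRing

theorem interMult_eq_rank (L : Type) [Field L] (f g : MvPolynomial (Fin 2) L) (p : L × L)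
    [(ptIdeal L p).IsPrime] :
    interMult L f g p = Module.rank L (Localization.AtPrime (ptIdeal L p) ⧸
      (Ideal.span {f, g}).map
        (algebraMap (MvPolynomial (Fin 2) L) (Localization.AtPrime (ptIdeal L p)))) := by
  rw [interMult, Ideal.map_span, Set.image_pair]

theorem mvToPolyPoly_X_zero (L : Type) [Field L] :
    mvToPolyPoly L (X 0) = Polynomial.X := by
  simp [mvToPolyPoly, finSuccEquiv_X_zero]

theorem mvToPolyPoly_X_one (L : Type) [Field L] :
    mvToPolyPoly L (X 1) = Polynomial.C Polynomial.X := by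
  have h : MvPolynomial.finSuccEquiv L 1 (X 1) = Polynomial.C (X 0) :=
    finSuccEquiv_X_succ (j := 0)
  simp [mvToPolyPoly, h, finSuccEquiv_X_zero]

theorem aeval_mvToPolyPoly_symm (L : Type) [Field L] (q : Polynomial (Polynomial L)) (a b : L) :
    aeval ![a, b] ((mvToPolyPoly L).symm q) =
      Polynomial.eval a (q.map (Polynomial.evalRingHom b)) := by
  obtain ⟨q, rfl⟩ := (mvToPolyPoly L).surjective q
  rw [AlgEquiv.symm_apply_apply]
  induction q using MvPolynomial.induction_on with
  | C c =>
    rw [← algebraMap_eq, AlgEquiv.commutes]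
    simp [Polynomial.algebraMap_apply]
  | add p q hp hq => simp only [map_add, hp, hq, Polynomial.map_add, Polynomial.eval_add]
  | mul_X p i hp =>
    rw [map_mul, map_mul, hp, Polynomial.map_mul, Polynomial.eval_mul]
    congr 1
    fin_cases i
    · simp [mvToPolyPoly_X_zero]
    · simp [mvToPolyPoly_X_one]

theorem mem_ptIdeal_symm_iff {L : Type} [Field L] {q : Polynomial (Polynomial L)} {p : L × L} :
    (mvToPolyPoly L).symm q ∈ ptIdeal L p ↔
      Polynomial.eval p.1 (q.map (Polynomial.evalRingHom p.2)) = 0 := by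
  rw [← aeval_mvToPolyPoly_symm, ptIdeal, RingHom.mem_ker]

/-- Locally at a point of the line `y = 0`, a power of `y` at least the order at `0` of the
resultant belongs to the ideal generated by `f` and `g`. -/
theorem map_span_triple_eq_map_span_pair {L : Type} [Field L] {f g : Polynomial (Polynomial L)}
    (hfd : 0 < f.natDegree) (hR : Polynomial.resultant f g ≠ 0) {k : ℕ}
    (hk : (Polynomial.resultant f g).rootMultiplicity 0 ≤ k) (a : L)
    [(ptIdeal L (a, 0)).IsPrime] :
    (Ideal.span {(mvToPolyPoly L).symm f, (mvToPolyPoly L).symm g,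
        (mvToPolyPoly L).symm (Polynomial.C (Polynomial.X ^ k))}).map
      (algebraMap (MvPolynomial (Fin 2) L) (Localization.AtPrime (ptIdeal L (a, 0)))) =
    (Ideal.span {(mvToPolyPoly L).symm f, (mvToPolyPoly L).symm g}).map
      (algebraMap (MvPolynomial (Fin 2) L) (Localization.AtPrime (ptIdeal L (a, 0)))) := by
  set J := Ideal.span {(mvToPolyPoly L).symm f, (mvToPolyPoly L).symm g} with hJ
  set ψ := algebraMap (MvPolynomial (Fin 2) L) (Localization.AtPrime (ptIdeal L (a, 0)))
  apply le_antisymm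
  · obtain ⟨u, hu, hu0⟩ :=
      Polynomial.exists_eq_pow_rootMultiplicity_mul_and_not_dvd _ hR 0
    rw [Polynomial.C_0, sub_zero] at hu hu0
    obtain ⟨p, q, -, -, hpq⟩ := Polynomial.exists_mul_add_mul_eq_C_resultant f g le_rfl le_rfl
      (Or.inl hfd.ne')
    have hunit : IsUnit (ψ ((mvToPolyPoly L).symm (Polynomial.C u))) := by
      refine IsLocalization.map_units (M := (ptIdeal L (a, 0)).primeCompl) _
        ⟨(mvToPolyPoly L).symm (Polynomial.C u), fun h => hu0 ?_⟩
      have h0 := mem_ptIdeal_symm_iff.mp h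
      rw [Polynomial.map_C, Polynomial.eval_C, Polynomial.coe_evalRingHom] at h0
      rwa [Polynomial.X_dvd_iff, Polynomial.coeff_zero_eq_eval_zero]
    have hmem : (mvToPolyPoly L).symm (Polynomial.C (Polynomial.X ^ k)) *
        (mvToPolyPoly L).symm (Polynomial.C u) ∈ J := by
      obtain ⟨j, rfl⟩ := Nat.exists_eq_add_of_le hk
      have e : Polynomial.C (Polynomial.X ^ j) * p * f + Polynomial.C (Polynomial.X ^ j) * q * g =
          Polynomial.C (Polynomial.X ^ ((Polynomial.resultant f g).rootMultiplicity 0 + j)) *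
            Polynomial.C u := by
        have hC := hpq.trans (congrArg Polynomial.C hu)
        rw [Polynomial.C_mul] at hC
        rw [pow_add, Polynomial.C_mul]
        linear_combination Polynomial.C (Polynomial.X ^ j) * hC
      refine Ideal.mem_span_pair.mpr ⟨(mvToPolyPoly L).symm (Polynomial.C (Polynomial.X ^ j) * p),
        (mvToPolyPoly L).symm (Polynomial.C (Polynomial.X ^ j) * q), ?_⟩
      rw [← map_mul, ← map_mul, ← map_mul, ← map_add, e]
    rw [Ideal.map_le_iff_le_comap, Ideal.span_le]
    rintro x (rfl | rfl | rfl)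
    · exact Ideal.mem_map_of_mem _ (Ideal.subset_span (by simp))
    · exact Ideal.mem_map_of_mem _ (Ideal.subset_span (by simp))
    · have := Ideal.mem_map_of_mem ψ hmem
      rw [map_mul] at this
      exact (Ideal.mul_unit_mem_iff_mem _ hunit).mp this
  · refine Ideal.map_mono (Ideal.span_mono ?_)
    rintro x (rfl | rfl) <;> simp

theorem exists_eq_ptIdeal_of_isMaximal {L : Type} [Field L] [IsAlgClosed L]
    {P : Ideal (MvPolynomial (Fin 2) L)} (hP : P.IsMaximal) : ∃ p : L × L, P = ptIdeal L p := by
  obtain ⟨x, hx⟩ := (isMaximal_iff_eq_vanishingIdeal_singleton (K := L)).mp hP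
  refine ⟨(x 0, x 1), hx.trans ?_⟩
  ext q
  rw [mem_vanishingIdeal_singleton_iff, ptIdeal, RingHom.mem_ker]
  have : x = ![x 0, x 1] := by ext i; fin_cases i <;> rfl
  conv_lhs => rw [this]

theorem ptIdeal_injective (L : Type) [Field L] : Function.Injective (ptIdeal L) := by
  intro p q h
  have h₀ : X 0 - C p.1 ∈ ptIdeal L q := h ▸ by simp [ptIdeal]
  have h₁ : X 1 - C p.2 ∈ ptIdeal L q := h ▸ by simp [ptIdeal]
  simp only [ptIdeal, RingHom.mem_ker, map_sub, aeval_X, sub_eq_zero] at h₀ h₁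
  exact Prod.ext (by simpa using h₀.symm) (by simpa using h₁.symm)

/-- Abhyankar's resultant formula (used in Lemma 4.7): if `f, g ∈ (L[y])[x]` are monic in
`x` of positive degree with no common nonconstant factor, then their resultant
`R = Res_x(f,g) ∈ L[y]` is nonzero, and the order of vanishing of `R` at `y = 0` equals
the sum of the intersection multiplicities of the curves `f = 0` and `g = 0` at their
common points on the line `y = 0`. -/
theorem resultant_order_eq_sum_interMult (L : Type) [Field L] [IsAlgClosed L]
    (f g : Polynomial (Polynomial L)) (hfm : f.Monic) (hgm : g.Monic)
    (hfd : 0 < f.natDegree) (hgd : 0 < g.natDegree)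
    (hcop : IsRelPrime f g) :
    resultant f g ≠ 0 ∧
    ∃ hfin : {a : L | Polynomial.eval a (f.map (Polynomial.evalRingHom (0 : L))) = 0 ∧
        Polynomial.eval a (g.map (Polynomial.evalRingHom (0 : L))) = 0}.Finite,
      ((resultant f g).rootMultiplicity 0 : Cardinal) =
        ∑ a ∈ hfin.toFinset,
          interMult L ((mvToPolyPoly L).symm f) ((mvToPolyPoly L).symm g) (a, 0) := by
  rw [resultant_eq_polynomial_resultant]
  have hR := polynomial_resultant_ne_zero hgm hcop.symm
  refine ⟨hR, ?_⟩
  have hfin : {a : L | Polynomial.eval a (f.map (Polynomial.evalRingHom (0 : L))) = 0 ∧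
      Polynomial.eval a (g.map (Polynomial.evalRingHom (0 : L))) = 0}.Finite :=
    (Polynomial.finite_setOfPred_isRoot (hfm.map (Polynomial.evalRingHom (0 : L))).ne_zero).subset
      fun a ha => ha.1
  refine ⟨hfin, ?_⟩
  obtain ⟨k, hk0, hk⟩ : ∃ k, k ≠ 0 ∧ (Polynomial.resultant g f).rootMultiplicity 0 ≤ k :=
    ⟨_, Nat.succ_ne_zero _, Nat.le_succ _⟩
  set I := Ideal.span {(mvToPolyPoly L).symm g, (mvToPolyPoly L).symm f,
    (mvToPolyPoly L).symm (Polynomial.C (Polynomial.X ^ k))} with hI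
  obtain ⟨hfinite, hrank⟩ := finrank_quotient_span_triple hgm hfm hcop.symm hk
  let e : (MvPolynomial (Fin 2) L ⧸ I) ≃ₐ[L] (Polynomial (Polynomial L) ⧸
      Ideal.span {g, f, Polynomial.C ((Polynomial.X : Polynomial L) ^ k)}) :=
    Ideal.quotientEquivAlg _ _ (mvToPolyPoly L) (by
      rw [hI, Ideal.map_span]
      simp [Set.image_insert_eq])
  have : Module.Finite L (MvPolynomial (Fin 2) L ⧸ I) := Module.Finite.equiv e.symm.toLinearEquiv
  have : IsArtinianRing (MvPolynomial (Fin 2) L ⧸ I) := IsArtinianRing.of_finite L _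
  have := Fintype.ofFinite (PrimeSpectrum (MvPolynomial (Fin 2) L ⧸ I))
  rw [← hrank, ← e.toLinearEquiv.finrank_eq, IsArtinianRing.finrank_eq_sum_primeSpectrum _ L,
    Nat.cast_sum]
  have hpt : ∀ P : PrimeSpectrum (MvPolynomial (Fin 2) L ⧸ I), ∃ a : L,
      P.asIdeal.comap (Ideal.Quotient.mk I) = ptIdeal L (a, 0) ∧
      Polynomial.eval a (f.map (Polynomial.evalRingHom (0 : L))) = 0 ∧
        Polynomial.eval a (g.map (Polynomial.evalRingHom (0 : L))) = 0 := by
    intro P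
    have hmax : (P.asIdeal.comap (Ideal.Quotient.mk I)).IsMaximal :=
      Ideal.comap_isMaximal_of_surjective _ Ideal.Quotient.mk_surjective
    obtain ⟨⟨a, b⟩, hab⟩ := exists_eq_ptIdeal_of_isMaximal hmax
    have hle : I ≤ ptIdeal L (a, b) := by
      rw [← hab]
      intro x hx
      rw [Ideal.mem_comap, Ideal.Quotient.eq_zero_iff_mem.mpr hx]
      exact zero_mem _
    have hb := mem_ptIdeal_symm_iff.mp (hle (Ideal.subset_span
      (show (mvToPolyPoly L).symm (Polynomial.C (Polynomial.X ^ k)) ∈ _ by simp)))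
    have hb0 : b = 0 := by simpa [hk0] using hb
    subst hb0
    exact ⟨a, hab, mem_ptIdeal_symm_iff.mp (hle (Ideal.subset_span (by simp))),
      mem_ptIdeal_symm_iff.mp (hle (Ideal.subset_span (by simp)))⟩
  choose pt hpt₁ hpt₂ using hpt
  refine Finset.sum_bij (fun P _ => pt P) (fun P _ => hfin.mem_toFinset.mpr (hpt₂ P)) ?_ ?_ ?_
  · intro P _ Q _ h
    apply PrimeSpectrum.ext
    apply Ideal.comap_injective_of_surjective _ (Ideal.Quotient.mk_surjective (I := I))
    rw [hpt₁, hpt₁, h]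
  · intro a ha
    obtain ⟨hf, hg⟩ := hfin.mem_toFinset.mp ha
    have hle : I ≤ ptIdeal L (a, 0) := by
      rw [hI, Ideal.span_le]
      rintro x (rfl | rfl | rfl) <;> refine mem_ptIdeal_symm_iff.mpr ?_
      · exact hg
      · exact hf
      · simp [hk0]
    have hprime : (ptIdeal L (a, 0)).IsPrime := (ptIdeal_isMaximal L (a, 0)).isPrime
    have hcomap : ((ptIdeal L (a, 0)).map (Ideal.Quotient.mk I)).comap (Ideal.Quotient.mk I) =
        ptIdeal L (a, 0) := by
      rw [Ideal.comap_map_of_surjective' _ Ideal.Quotient.mk_surjective, Ideal.mk_ker,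
        sup_eq_left.mpr hle]
    let Q : PrimeSpectrum (MvPolynomial (Fin 2) L ⧸ I) :=
      ⟨(ptIdeal L (a, 0)).map (Ideal.Quotient.mk I),
        Ideal.map_isPrime_of_surjective Ideal.Quotient.mk_surjective
          (by rwa [Ideal.mk_ker])⟩
    refine ⟨Q, Finset.mem_univ _, ?_⟩
    exact congrArg Prod.fst (ptIdeal_injective L ((hpt₁ Q).symm.trans hcomap))
  · intro P _
    have hprime : (ptIdeal L (pt P, 0)).IsPrime := (ptIdeal_isMaximal L (pt P, 0)).isPrime
    obtain ⟨e⟩ := nonempty_localization_quotient_equiv (K := L) I P.asIdeal _ (hpt₁ P)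
    have : Module.Finite L (Localization.AtPrime P.asIdeal) :=
      Module.Finite.of_surjective
        (Algebra.algHom L (MvPolynomial (Fin 2) L ⧸ I)
          (Localization.AtPrime P.asIdeal)).toLinearMap
        (IsArtinianRing.localization_surjective P.asIdeal.primeCompl _)
    rw [interMult_eq_rank, Set.pair_comm,
      ← map_span_triple_eq_map_span_pair hgd hR hk, Module.finrank_eq_rank]
    exact e.rank_eq.symm
end
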